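/- Lemma 3.2 (epi-convergence interchange of limsup and sup): let D ⊆ ℝ^m be a nonempty compact set and let f_n, f : D → ℝ be functions such that for every x ∈ D and every sequence (x_n) in D with x_n → x one has limsup_{n→∞} f_n(x_n) ≤ f(x). Then limsup_{n→∞} sup_{x∈D} f_n(x) ≤ sup_{x∈D} f(x). -/

import Mathlib

/-!
If the inequality failed, some `c` above `sup g` would satisfy `c ≤ f n y` for infinitely many `n`
and suitable points `y ∈ D` depending on `n`. By compactness these points converge to some `x ∈ D`
along a further subsequence. Filling the remaining indices with `x` itself gives a full sequence in
`D` converging to `x`, so the hypothesis yields `c ≤ g x`, contradicting `sup g < c`.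
-/

open Filter
open scoped Topology

theorem tendsto_extend {α β γ : Type*} {φ : α → β} (hφ : φ.Injective) {u : α → γ} {v : β → γ}
    {l : Filter β} {l' : Filter γ} (hu : Tendsto u (comap φ l) l') (hv : Tendsto v l l') :
    Tendsto (Function.extend φ u v) l l' := by
  refine tendsto_def.2 fun U hU => ?_
  filter_upwards [eventually_comap.1 (hu.eventually_mem hU), hv.eventually_mem hU] with b hub hvb
  by_cases hb : ∃ a, φ a = b
  · obtain ⟨a, rfl⟩ := hb
    simpa only [Set.mem_preimage, hφ.extend_apply] using hub a rfl
  · simpa only [Set.mem_preimage, Function.extend_apply' _ _ _ hb] using hvb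

theorem exists_seq_tendsto_of_frequently_exists_mem {X : Type*} [TopologicalSpace X] {D : Set X}
    (hD : IsSeqCompact D) {P : ℕ → X → Prop} (hP : ∃ᶠ n in atTop, ∃ y ∈ D, P n y) :
    ∃ x ∈ D, ∃ xs : ℕ → X,
      (∀ n, xs n ∈ D) ∧ Tendsto xs atTop (𝓝 x) ∧ ∃ᶠ n in atTop, P n (xs n) := by
  obtain ⟨φ, hφ, hPφ⟩ := extraction_of_frequently_atTop hP
  choose y hyD hPy using hPφ
  obtain ⟨x, hxD, ψ, hψ, hlim⟩ := hD hyD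
  have hθ : StrictMono (φ ∘ ψ) := hφ.comp hψ
  refine ⟨x, hxD, Function.extend (φ ∘ ψ) (y ∘ ψ) fun _ => x, fun n => ?_, ?_, ?_⟩
  · obtain ⟨k, hk⟩ | ⟨_, _, hx⟩ := Set.range_extend_subset _ _ _ (Set.mem_range_self n)
    · exact hk ▸ hyD (ψ k)
    · exact hx ▸ hxD
  · have hcomap : comap (φ ∘ ψ) atTop = atTop :=
      comap_embedding_atTop (fun _ _ => hθ.le_iff_le) fun n => ⟨n, hθ.le_apply⟩
    exact tendsto_extend hθ.injective (hcomap.symm ▸ hlim) tendsto_const_nhds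
  · refine hθ.tendsto_atTop.frequently (Frequently.of_forall fun k => ?_)
    rw [hθ.injective.extend_apply]
    exact hPy (ψ k)

theorem limsup_sup_le_of_epi_general {X β : Type*} [TopologicalSpace X] [CompleteLinearOrder β]
    {D : Set X} (hD : IsSeqCompact D) {f : ℕ → X → β} {g : X → β}
    (hepi : ∀ x ∈ D, ∀ xs : ℕ → X, (∀ n, xs n ∈ D) → Tendsto xs atTop (𝓝 x) →
      limsup (fun n => f n (xs n)) atTop ≤ g x) :
    limsup (fun n => ⨆ x ∈ D, f n x) atTop ≤ ⨆ x ∈ D, g x := by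
  by_contra! hlt
  -- `b < z` implies `c ≤ z` for every `z`: this replaces a point strictly in between when `β` is
  -- not densely ordered.
  obtain ⟨c, hgc, b, hb, hbc⟩ := hlt.exists_disjoint_Iio_Ioi
  have hfreq : ∃ᶠ n in atTop, ∃ y ∈ D, c ≤ f n y :=
    (frequently_lt_of_lt_limsup (by isBoundedDefault) hb).mono fun n hn =>
      let ⟨y, hyD, hby⟩ := lt_biSup_iff.1 hn
      ⟨y, hyD, le_of_not_gt fun hyc => (hbc _ hyc _ hby).false⟩
  obtain ⟨x, hxD, xs, hxsD, hlim, hcxs⟩ := exists_seq_tendsto_of_frequently_exists_mem hD hfreq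
  have hcg : c ≤ ⨆ x ∈ D, g x := calc
    c ≤ limsup (fun n => f n (xs n)) atTop := le_limsup_of_frequently_le hcxs
    _ ≤ g x := hepi x hxD xs hxsD hlim
    _ ≤ ⨆ x ∈ D, g x := le_biSup g hxD
  exact hgc.not_ge hcg

/-- Lemma 3.2 (epi-convergence interchange of limsup and sup): if `D ⊆ ℝ^m` is a nonempty
compact set and `f_n, f : D → ℝ` are such that for every `x ∈ D` and every sequence
`x_n → x` in `D` one has `limsup_n f_n(x_n) ≤ f(x)`, then
`limsup_n sup_{x ∈ D} f_n(x) ≤ sup_{x ∈ D} f(x)` (suprema and limsup in the extended reals). -/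
theorem limsup_sup_le_of_epi {m : ℕ} (D : Set (Fin m → ℝ))
    (hDne : D.Nonempty) (hDcpt : IsCompact D)
    (f : ℕ → (Fin m → ℝ) → ℝ) (g : (Fin m → ℝ) → ℝ)
    (hepi : ∀ x ∈ D, ∀ xs : ℕ → (Fin m → ℝ), (∀ n, xs n ∈ D) →
      Tendsto xs atTop (𝓝 x) →
      Filter.limsup (fun n => ((f n (xs n) : ℝ) : EReal)) atTop ≤ ((g x : ℝ) : EReal)) :
    Filter.limsup (fun n => ⨆ x ∈ D, ((f n x : ℝ) : EReal)) atTop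
      ≤ ⨆ x ∈ D, ((g x : ℝ) : EReal) :=
  limsup_sup_le_of_epi_general hDcpt.isSeqCompact hepi
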